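/- Every delivery instance admits an allocation that is simultaneously non-wasteful and egalitarian optimal. -/

import Mathlib

/-- A delivery instance: a finite tree rooted at the hub (encoded by a parent
function `par`; the edges of the tree are the pairs `{v, par v}` for `v ≠ hub`),
positive edge weights (`w v` is the weight of the edge between `v` and its
parent, for `v ≠ hub`), and `n` agents. -/
structure DeliveryInstance where
  V : Type
  fintypeV : Fintype V
  decEqV : DecidableEq V
  hub : V
  par : V → V
  w : V → ℝ
  par_hub : par hub = hub
  reaches_hub : ∀ v : V, ∃ k : ℕ, par^[k] v = hub
  w_pos : ∀ v : V, v ≠ hub → 0 < w v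
  n : ℕ
  n_pos : 0 < n

attribute [instance] DeliveryInstance.fintypeV DeliveryInstance.decEqV

namespace DeliveryInstance

variable (I : DeliveryInstance)

/-- `u` lies on the path from the hub to `v` (equivalently, `u` is a weak
ancestor of `v` in the tree rooted at the hub). -/
def Anc (u v : I.V) : Prop := ∃ k : ℕ, I.par^[k] v = u

/-- A leaf of the tree rooted at the hub: a vertex with no children. -/
def IsLeaf (v : I.V) : Prop := ∀ u : I.V, I.par u = v → u = v

/-- The set of leaves of the topology. -/
def leaves : Set I.V := {v : I.V | I.IsLeaf v}

/-- The instance is unweighted if every edge has weight 1. -/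
def Unweighted : Prop := ∀ v : I.V, v ≠ I.hub → I.w v = 1

/-- The cost of servicing a set `A` of orders: the total weight of the edges of
the tree that lie on the path from the hub to some vertex of `A` (the edge
between `u ≠ hub` and its parent lies on such a path iff `u` is a weak ancestor
of a member of `A`).  In particular `cost ∅ = 0`. -/
noncomputable def cost (A : Set I.V) : ℝ :=
  ∑ u : I.V, Set.indicator {u : I.V | u ≠ I.hub ∧ ∃ v ∈ A, I.Anc u v} I.w u

/-- The bundle of agent `i` under allocation `π`: the set of orders serviced by `i`. -/
def bundle (π : I.V → Fin I.n) (i : Fin I.n) : Set I.V :=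
  {v : I.V | v ≠ I.hub ∧ π v = i}

/-- An allocation is non-wasteful if every order `v` is serviced by an agent
that also services some leaf of the subtree rooted at `v`. -/
def NonWasteful (π : I.V → Fin I.n) : Prop :=
  ∀ v : I.V, v ≠ I.hub → ∃ l : I.V, I.IsLeaf l ∧ I.Anc v l ∧ π l = π v

/-- Total (utilitarian) cost of an allocation. -/
noncomputable def totalCost (π : I.V → Fin I.n) : ℝ :=
  ∑ i : Fin I.n, I.cost (I.bundle π i)

/-- The maximum bundle cost of an allocation. -/
noncomputable def maxCost (π : I.V → Fin I.n) : ℝ :=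
  Finset.univ.sup' ⟨⟨0, I.n_pos⟩, Finset.mem_univ _⟩ fun i : Fin I.n => I.cost (I.bundle π i)

/-- The minimax (MMS) share of the instance: the minimum over all allocations
of the maximum bundle cost. -/
noncomputable def MMSshare : ℝ :=
  Finset.univ.inf' ⟨fun _ => ⟨0, I.n_pos⟩, Finset.mem_univ _⟩
    fun π : I.V → Fin I.n => I.maxCost π

/-- An allocation is MMS if every bundle costs at most the MMS share. -/
def IsMMS (π : I.V → Fin I.n) : Prop :=
  ∀ i : Fin I.n, I.cost (I.bundle π i) ≤ I.MMSshare

/-- Pareto optimality: no allocation makes every agent weakly better off and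
some agent strictly better off. -/
def ParetoOptimal (π : I.V → Fin I.n) : Prop :=
  ¬ ∃ π' : I.V → Fin I.n,
      (∀ i : Fin I.n, I.cost (I.bundle π' i) ≤ I.cost (I.bundle π i)) ∧
      ∃ j : Fin I.n, I.cost (I.bundle π' j) < I.cost (I.bundle π j)

/-- Utilitarian optimality: minimizes the sum of bundle costs. -/
def UtilitarianOptimal (π : I.V → Fin I.n) : Prop :=
  ∀ π' : I.V → Fin I.n, I.totalCost π ≤ I.totalCost π'

/-- Egalitarian optimality: minimizes the maximum bundle cost. -/
def EgalitarianOptimal (π : I.V → Fin I.n) : Prop :=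
  ∀ π' : I.V → Fin I.n, I.maxCost π ≤ I.maxCost π'

/-- Envy-freeness. -/
def EF (π : I.V → Fin I.n) : Prop :=
  ∀ i j : Fin I.n, I.cost (I.bundle π i) ≤ I.cost (I.bundle π j)

/-- Envy-freeness up to one order. -/
def EF1 (π : I.V → Fin I.n) : Prop :=
  ∀ i j : Fin I.n,
    I.bundle π i = ∅ ∨ ∃ v ∈ I.bundle π i, I.cost (I.bundle π i \ {v}) ≤ I.cost (I.bundle π j)

end DeliveryInstance

/-!
Hand every order over to the agent who, in an egalitarian optimal allocation, services some leaf
below it. A leaf is the only vertex below itself, so the result is non-wasteful. Every order an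
agent services now lies on the way to a leaf already in its original bundle, so no bundle becomes
more expensive and optimality is preserved.
-/

open Function in
theorem isFixedPt_of_isFixedPt_iterate {α : Type*} {f : α → α} {x : α} {k : ℕ}
    (hx : x ∈ periodicPts f) (hk : IsFixedPt f (f^[k] x)) : IsFixedPt f x := by
  rw [← minimalPeriod_eq_one_iff_isFixedPt] at hk ⊢
  rw [← minimalPeriod_apply_iterate hx k, hk]

namespace DeliveryInstance

open Function

variable {I : DeliveryInstance} {u v l : I.V}

theorem Anc.refl (v : I.V) : I.Anc v v := ⟨0, rfl⟩

theorem Anc.trans (huv : I.Anc u v) (hvl : I.Anc v l) : I.Anc u l := by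
  obtain ⟨k, rfl⟩ := huv
  obtain ⟨m, rfl⟩ := hvl
  exact ⟨k + m, iterate_add_apply _ _ _ _⟩

theorem isFixedPt_par_of_mem_periodicPts (hv : v ∈ periodicPts I.par) : IsFixedPt I.par v := by
  obtain ⟨k, hk⟩ := I.reaches_hub v
  exact isFixedPt_of_isFixedPt_iterate hv (hk ▸ I.par_hub)

theorem Anc.antisymm (huv : I.Anc u v) (hvu : I.Anc v u) : u = v := by
  obtain ⟨k, rfl⟩ := huv
  obtain ⟨m, hm⟩ := hvu
  rcases k.eq_zero_or_pos with rfl | hk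
  · rfl
  · have hper : IsPeriodicPt I.par (m + k) v := (iterate_add_apply _ _ _ _).trans hm
    exact (isFixedPt_par_of_mem_periodicPts ⟨m + k, by lia, hper⟩).iterate k

/-- The tree order of the instance: `u ≤ v` means that `u` is a weak ancestor of `v`, so the hub
is the least vertex and the leaves are the maximal ones. -/
instance instPartialOrder : PartialOrder I.V where
  le := I.Anc
  le_refl := Anc.refl
  le_trans _ _ _ := Anc.trans
  le_antisymm _ _ := Anc.antisymm

theorem isLeaf_iff_isMax : I.IsLeaf v ↔ IsMax v := by
  constructor
  · rintro hv u ⟨k, hk⟩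
    induction k with
    | zero => exact hk.le
    | succ k ih => exact ih (hv _ (by rwa [iterate_succ_apply'] at hk))
  · intro hv u hu
    exact (hv.eq_of_le ⟨1, hu⟩).symm

variable (I) in
theorem exists_isLeaf_anc (v : I.V) : ∃ l, I.IsLeaf l ∧ I.Anc v l := by
  obtain ⟨l, hvl, hl⟩ := Finite.exists_le_maximal (p := fun _ : I.V => True) (a := v) trivial
  exact ⟨l, isLeaf_iff_isMax.2 (maximal_true.1 hl), hvl⟩

theorem anc_hub_iff : I.Anc v I.hub ↔ v = I.hub := by
  constructor
  · rintro ⟨k, rfl⟩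
    exact iterate_fixed I.par_hub k
  · rintro rfl
    exact Anc.refl _

theorem cost_le_cost_of_forall_exists_anc {A B : Set I.V} (h : ∀ v ∈ A, ∃ l ∈ B, I.Anc v l) :
    I.cost A ≤ I.cost B := by
  have hsub : {u | u ≠ I.hub ∧ ∃ v ∈ A, I.Anc u v} ⊆ {u | u ≠ I.hub ∧ ∃ l ∈ B, I.Anc u l} := by
    rintro u ⟨hu, v, hv, huv⟩
    obtain ⟨l, hl, hvl⟩ := h v hv
    exact ⟨hu, l, hl, huv.trans hvl⟩
  refine Finset.sum_le_sum fun u _ => ?_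
  by_cases hu : u = I.hub
  · -- `I.w I.hub` may be negative, but the hub lies in neither indicator set.
    simp [hu]
  · exact Set.indicator_le_indicator_apply_of_subset hsub (I.w_pos u hu).le

variable {f : I.V → I.V}

theorem nonWasteful_comp (hleaf : ∀ v, I.IsLeaf (f v)) (hanc : ∀ v, I.Anc v (f v))
    (π : I.V → Fin I.n) : I.NonWasteful (π ∘ f) := by
  intro v _
  have hfix : f (f v) = f v := ((isLeaf_iff_isMax.1 (hleaf v)).eq_of_le (hanc (f v))).symm
  exact ⟨f v, hleaf v, hanc v, congrArg π hfix⟩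

theorem cost_bundle_comp_le (hanc : ∀ v, I.Anc v (f v)) (π : I.V → Fin I.n) (i : Fin I.n) :
    I.cost (I.bundle (π ∘ f) i) ≤ I.cost (I.bundle π i) := by
  refine cost_le_cost_of_forall_exists_anc fun v ⟨hv, hπ⟩ => ⟨f v, ⟨fun hfv => hv ?_, hπ⟩, hanc v⟩
  exact anc_hub_iff.1 (hfv ▸ hanc v)

theorem maxCost_comp_le (hanc : ∀ v, I.Anc v (f v)) (π : I.V → Fin I.n) :
    I.maxCost (π ∘ f) ≤ I.maxCost π :=
  Finset.sup'_mono_fun fun i _ => cost_bundle_comp_le hanc π i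

variable (I) in
theorem exists_egalitarianOptimal : ∃ π : I.V → Fin I.n, I.EgalitarianOptimal π :=
  have : Nonempty (Fin I.n) := ⟨⟨0, I.n_pos⟩⟩
  Finite.exists_min I.maxCost

end DeliveryInstance

/-- Every delivery instance admits an allocation that is both
non-wasteful and egalitarian optimal. -/
theorem stmt5 (I : DeliveryInstance) :
    ∃ π : I.V → Fin I.n, I.NonWasteful π ∧ I.EgalitarianOptimal π := by
  obtain ⟨π, hπ⟩ := I.exists_egalitarianOptimal
  choose f hleaf hanc using I.exists_isLeaf_anc
  refine ⟨π ∘ f, DeliveryInstance.nonWasteful_comp hleaf hanc π, fun π' => ?_⟩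
  exact (DeliveryInstance.maxCost_comp_le hanc π).trans (hπ π')
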